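/- arXiv:1506.04036 — 3 statements merged into one kernel-verified Lean document; each statement's English description precedes it below -/
import Mathlib

section
/- For every F_{q^m}-linear subspace D ⊆ F_{q^m}^n, the following three quantities coincide: dim_{F_q} G(D), dim_{F_q} Tr(D), and dim_{F_{q^m}} D*. Here, having fixed a basis α_1, ..., α_m of F_{q^m} over F_q and writing each d ∈ D uniquely as d = Σ_{i=1}^m α_i d_i with d_i ∈ F_q^n, G(D) ⊆ F_q^n is the F_q-span of all the coordinate vectors d_i of all d ∈ D; Tr(D) = { Tr(d) : d ∈ D } ⊆ F_q^n, where Tr applies the field trace of F_{q^m}/F_q coordinatewise. -/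
open Submodule Module

namespace RankPaper

variable {n : ℕ}

/-- The coordinatewise `q^i`-th power map on `Fqm^n`. -/
def qpowMap (q i : ℕ) {Fqm : Type} [Field Fqm] (v : Fin n → Fqm) : Fin n → Fqm :=
  fun j => v j ^ q ^ i

/-- The Galois closure `D* = Σ_{i=0}^{m-1} D^{q^i}` of a subspace (as the span of the
union of the images of `D` under the coordinatewise `q^i`-power maps, `0 ≤ i < m`). -/
def galClosure (q m : ℕ) {Fqm : Type} [Field Fqm] (D : Submodule Fqm (Fin n → Fqm)) :
    Submodule Fqm (Fin n → Fqm) :=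
  Submodule.span Fqm (⋃ i ∈ Finset.range m, qpowMap q i '' (D : Set (Fin n → Fqm)))

/-- `D` is Galois closed if `D = D*`. -/
def GaloisClosed (q m : ℕ) {Fqm : Type} [Field Fqm] (D : Submodule Fqm (Fin n → Fqm)) : Prop :=
  galClosure q m D = D

/-- Rank weight of a subspace: `wt_R(D) = dim_{Fqm} D*`. -/
noncomputable def wtR (q m : ℕ) {Fqm : Type} [Field Fqm]
    (D : Submodule Fqm (Fin n → Fqm)) : ℕ :=
  finrank Fqm (galClosure q m D)

/-- Rank weight of a vector: `wt_R(c) = wt_R(span {c})`. -/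
noncomputable def wtRv (q m : ℕ) {Fqm : Type} [Field Fqm] (c : Fin n → Fqm) : ℕ :=
  wtR q m (Submodule.span Fqm ({c} : Set (Fin n → Fqm)))

/-- Hamming weight of a subspace: the number of coordinates where some element is nonzero. -/
noncomputable def wtH {Fqm : Type} [Field Fqm] (D : Submodule Fqm (Fin n → Fqm)) : ℕ :=
  {i : Fin n | ∃ d ∈ D, d i ≠ 0}.ncard

/-- `r`-th generalized rank weight of a linear code. -/
noncomputable def dR (q m : ℕ) {Fqm : Type} [Field Fqm]
    (C : Submodule Fqm (Fin n → Fqm)) (r : ℕ) : ℕ :=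
  sInf { dv | ∃ V : Submodule Fqm (Fin n → Fqm),
    GaloisClosed q m V ∧ r ≤ finrank Fqm ↥(C ⊓ V) ∧ dv = finrank Fqm ↥V }

/-- `r`-th generalized Hamming weight of a linear code. -/
noncomputable def dH {Fqm : Type} [Field Fqm]
    (C : Submodule Fqm (Fin n → Fqm)) (r : ℕ) : ℕ :=
  sInf { w | ∃ D : Submodule Fqm (Fin n → Fqm), D ≤ C ∧ finrank Fqm ↥D = r ∧ w = wtH D }

/-- `r`-th relative generalized rank weight of a nested code pair. -/
noncomputable def MR (q m : ℕ) {Fqm : Type} [Field Fqm]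
    (C₁ C₂ : Submodule Fqm (Fin n → Fqm)) (r : ℕ) : ℕ :=
  sInf { dv | ∃ V : Submodule Fqm (Fin n → Fqm), GaloisClosed q m V ∧
    r ≤ finrank Fqm ↥(C₁ ⊓ V) - finrank Fqm ↥(C₂ ⊓ V) ∧ dv = finrank Fqm ↥V }

/-- Minimum rank distance of an arbitrary (possibly nonlinear) code. -/
noncomputable def dRset (q m : ℕ) {Fqm : Type} [Field Fqm] (C : Set (Fin n → Fqm)) : ℕ :=
  sInf { w | ∃ c₁ ∈ C, ∃ c₂ ∈ C, c₁ ≠ c₂ ∧ w = wtRv q m (c₁ - c₂) }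

/-- The linear functional `x ↦ Σ_j x_j y_j` (dot product with `y`). -/
def dotLin {K : Type} [Field K] (y : Fin n → K) : (Fin n → K) →ₗ[K] K :=
  ∑ j, y j • LinearMap.proj j

/-- Orthogonal complement of a subspace with respect to the standard bilinear form. -/
def perp {K : Type} [Field K] (L : Submodule K (Fin n → K)) : Submodule K (Fin n → K) :=
  ⨅ y ∈ L, LinearMap.ker (dotLin y)

/-- The coordinatewise inclusion `Fq^n → Fqm^n`. -/
def embFq (Fq Fqm : Type) [Field Fq] [Field Fqm] [Algebra Fq Fqm] :
    (Fin n → Fq) →ₗ[Fq] (Fin n → Fqm) :=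
  LinearMap.pi fun j => (Algebra.linearMap Fq Fqm).comp (LinearMap.proj j)

/-- `V_L = L ⊗ Fqm`, the `Fqm`-span of `L ⊆ Fq^n` inside `Fqm^n`. -/
def VL {Fq : Type} (Fqm : Type) [Field Fq] [Field Fqm] [Algebra Fq Fqm]
    (L : Submodule Fq (Fin n → Fq)) : Submodule Fqm (Fin n → Fqm) :=
  Submodule.span Fqm (embFq Fq Fqm '' (L : Set (Fin n → Fq)))

/-- Rank-punctured code `C^L`: the image of `C` in `Fqm^n / V_{L^⊥}`. -/
noncomputable def punct {Fq Fqm : Type} [Field Fq] [Field Fqm] [Algebra Fq Fqm]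
    (L : Submodule Fq (Fin n → Fq)) (C : Submodule Fqm (Fin n → Fqm)) :
    Submodule Fqm ((Fin n → Fqm) ⧸ VL Fqm (perp L)) :=
  Submodule.map (VL Fqm (perp L)).mkQ C


/-- `G(D)`: the `Fq`-span of the coordinate vectors (w.r.t. the basis `α` of `Fqm` over `Fq`)
of all the elements of `D`. -/
def GD {m : ℕ} {Fq Fqm : Type} [Field Fq] [Field Fqm] [Algebra Fq Fqm]
    (α : Basis (Fin m) Fq Fqm) (D : Submodule Fqm (Fin n → Fqm)) :
    Submodule Fq (Fin n → Fq) :=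
  Submodule.span Fq { v | ∃ d ∈ D, ∃ i : Fin m, v = fun j => α.repr (d j) i }

/-- The coordinatewise field trace `Fqm^n → Fq^n`. -/
noncomputable def trMap (Fq Fqm : Type) [Field Fq] [Field Fqm] [Algebra Fq Fqm] :
    (Fin n → Fqm) →ₗ[Fq] (Fin n → Fq) :=
  LinearMap.pi fun j => (Algebra.trace Fq Fqm).comp (LinearMap.proj j)

/-!
Extension of scalars `L ↦ VL Fqm L` preserves dimensions, so it suffices to see that
`G(D) = Tr(D)` and that extending scalars turns this space into `D*`.

For the first equality, if `β` is the trace-dual basis of `α`, the `i`-th coordinate vector of `d`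
is `Tr(β i • d)`; conversely `Tr(d)` is the combination of the coordinate vectors of `d` with
coefficients `Tr(α i)`.

For the second, `Tr(d)` is the sum of the Frobenius conjugates of `d`, hence lies in `D*`.
Conversely, a conjugate `σ(d)` is the combination of the coordinate vectors of `d` with coefficients
`σ(α i)`, because `σ` fixes `Fq`; hence it lies in the span of `G(D)`.
-/

section

variable {m : ℕ} {Fq Fqm : Type} [Field Fq] [Field Fqm] [Algebra Fq Fqm]

theorem VL_span (s : Set (Fin n → Fq)) :
    VL Fqm (span Fq s) = span Fqm (embFq Fq Fqm '' s) := by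
  rw [VL, ← map_coe, map_span, span_span_of_tower]

theorem finrank_VL_span_range {ι : Type*} [Fintype ι] {v : ι → Fin n → Fq}
    (hv : LinearIndependent Fq v) :
    finrank Fqm (VL Fqm (span Fq (Set.range v))) = Fintype.card ι := by
  have linearIndependent_embFq_comp : LinearIndependent Fqm (embFq Fq Fqm ∘ v) :=
    linearIndependent_algebraMap_comp_iff.mpr hv
  rw [VL_span, ← Set.range_comp, finrank_span_eq_card linearIndependent_embFq_comp]

theorem finrank_VL (L : Submodule Fq (Fin n → Fq)) : finrank Fqm (VL Fqm L) = finrank Fq L := by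
  obtain ⟨v, -, v_span, hv⟩ := exists_fun_fin_finrank_span_eq Fq (L : Set (Fin n → Fq))
  rw [← L.span_eq, ← v_span, finrank_VL_span_range hv, finrank_span_eq_card hv]

/-- The coordinate vector `d_i ∈ Fq^n` in the expansion `d = Σ_i α_i d_i` of `d ∈ Fqm^n`. -/
noncomputable def coordVec (α : Basis (Fin m) Fq Fqm) (i : Fin m) (d : Fin n → Fqm) : Fin n → Fq :=
  fun j => α.repr (d j) i

theorem coordVec_mem_GD (α : Basis (Fin m) Fq Fqm) {D : Submodule Fqm (Fin n → Fqm)}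
    {d : Fin n → Fqm} (hd : d ∈ D) (i : Fin m) : coordVec α i d ∈ GD α D :=
  subset_span ⟨d, hd, i, rfl⟩

theorem trMap_eq_sum_coordVec (α : Basis (Fin m) Fq Fqm) (d : Fin n → Fqm) :
    trMap Fq Fqm d = ∑ i, Algebra.trace Fq Fqm (α i) • coordVec α i d := by
  ext j
  calc Algebra.trace Fq Fqm (d j)
      = Algebra.trace Fq Fqm (∑ i, α.repr (d j) i • α i) := by rw [α.sum_repr]
    _ = (∑ i, Algebra.trace Fq Fqm (α i) • coordVec α i d) j := by
        simp only [map_sum, map_smul, Finset.sum_apply, Pi.smul_apply, smul_eq_mul,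
          mul_comm, coordVec]

theorem trMap_traceDual_smul [FiniteDimensional Fq Fqm] [Algebra.IsSeparable Fq Fqm]
    (α : Basis (Fin m) Fq Fqm) (i : Fin m) (d : Fin n → Fqm) :
    trMap Fq Fqm (α.traceDual i • d) = coordVec α i d := by
  ext j
  calc Algebra.trace Fq Fqm (α.traceDual i * d j)
      = α.traceDual.traceDual.repr (d j) i := by
        rw [Basis.traceDual_repr_apply, Algebra.traceForm_apply, mul_comm]
    _ = α.repr (d j) i := by rw [Basis.traceDual_traceDual]

theorem GD_eq_map_trMap [Algebra.IsSeparable Fq Fqm] (α : Basis (Fin m) Fq Fqm)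
    (D : Submodule Fqm (Fin n → Fqm)) :
    GD α D = (D.restrictScalars Fq).map (trMap Fq Fqm) := by
  have : FiniteDimensional Fq Fqm := .of_basis α
  apply le_antisymm
  · refine span_le.mpr ?_
    rintro _ ⟨d, hd, i, rfl⟩
    exact ⟨α.traceDual i • d, D.smul_mem _ hd, trMap_traceDual_smul α i d⟩
  · rintro _ ⟨d, hd, rfl⟩
    rw [trMap_eq_sum_coordVec α]
    exact sum_mem fun i _ => smul_mem _ _ (coordVec_mem_GD α hd i)

theorem algHom_comp_eq_sum_coordVec {K : Type} [Field K] [Algebra Fq K] (σ : Fqm →ₐ[Fq] K)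
    (α : Basis (Fin m) Fq Fqm) (d : Fin n → Fqm) :
    σ ∘ d = ∑ i, σ (α i) • embFq Fq K (coordVec α i d) := by
  ext j
  calc σ (d j)
      = σ (∑ i, α.repr (d j) i • α i) := by rw [α.sum_repr]
    _ = (∑ i, σ (α i) • embFq Fq K (coordVec α i d)) j := by
        simp [coordVec, embFq, Algebra.smul_def, mul_comm]

theorem algHom_comp_mem_VL_GD {K : Type} [Field K] [Algebra Fq K] (σ : Fqm →ₐ[Fq] K)
    (α : Basis (Fin m) Fq Fqm) {D : Submodule Fqm (Fin n → Fqm)} {d : Fin n → Fqm} (hd : d ∈ D) :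
    σ ∘ d ∈ VL K (GD α D) := by
  rw [algHom_comp_eq_sum_coordVec σ α]
  exact sum_mem fun i _ => smul_mem _ _ (subset_span ⟨_, coordVec_mem_GD α hd i, rfl⟩)

theorem qpowMap_eq_frobeniusAlgHom_pow_comp [Fintype Fq] (i : ℕ) (d : Fin n → Fqm) :
    qpowMap (Nat.card Fq) i d = ⇑(FiniteField.frobeniusAlgHom Fq Fqm ^ i) ∘ d := by
  ext j
  simp [qpowMap, AlgHom.coe_pow, FiniteField.coe_frobeniusAlgHom, pow_iterate]

theorem galClosure_le_VL_GD [Finite Fq] (k : ℕ) (α : Basis (Fin m) Fq Fqm)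
    (D : Submodule Fqm (Fin n → Fqm)) :
    galClosure (Nat.card Fq) k D ≤ VL Fqm (GD α D) := by
  have := Fintype.ofFinite Fq
  refine span_le.mpr (Set.iUnion₂_subset fun i _ => ?_)
  rintro _ ⟨d, hd, rfl⟩
  rw [qpowMap_eq_frobeniusAlgHom_pow_comp]
  exact algHom_comp_mem_VL_GD _ α hd

theorem embFq_trMap_eq_sum_qpowMap [Finite Fqm] (d : Fin n → Fqm) :
    embFq Fq Fqm (trMap Fq Fqm d) =
      ∑ i ∈ Finset.range (finrank Fq Fqm), qpowMap (Nat.card Fq) i d := by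
  ext j
  simpa [embFq, trMap, qpowMap] using FiniteField.algebraMap_trace_eq_sum_pow Fq Fqm (d j)

theorem VL_map_trMap_le_galClosure [Finite Fqm] (D : Submodule Fqm (Fin n → Fqm)) :
    VL Fqm ((D.restrictScalars Fq).map (trMap Fq Fqm)) ≤
      galClosure (Nat.card Fq) (finrank Fq Fqm) D := by
  refine span_le.mpr ?_
  rintro _ ⟨_, ⟨d, hd, rfl⟩, rfl⟩
  rw [embFq_trMap_eq_sum_qpowMap]
  exact sum_mem fun i hi => subset_span (Set.mem_biUnion hi ⟨d, hd, rfl⟩)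

theorem VL_map_trMap_eq_galClosure [Finite Fqm] (D : Submodule Fqm (Fin n → Fqm)) :
    VL Fqm ((D.restrictScalars Fq).map (trMap Fq Fqm)) =
      galClosure (Nat.card Fq) (finrank Fq Fqm) D := by
  have : Finite Fq := .of_injective _ (algebraMap Fq Fqm).injective
  refine (VL_map_trMap_le_galClosure D).antisymm ?_
  rw [← GD_eq_map_trMap (finBasis Fq Fqm)]
  exact galClosure_le_VL_GD _ _ D

end

/-- for every `Fqm`-linear subspace `D ⊆ Fqm^n`,
`dim_{Fq} G(D) = dim_{Fq} Tr(D) = dim_{Fqm} D*`. -/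
theorem stmt0 (q m n : ℕ) (Fq Fqm : Type) [Field Fq] [Field Fqm] [Algebra Fq Fqm]
    [Finite Fqm] (hq : Nat.card Fq = q) (hqpp : IsPrimePow q)
    (α : Basis (Fin m) Fq Fqm) (D : Submodule Fqm (Fin n → Fqm)) :
    finrank Fq (GD α D) = finrank Fq ((D.restrictScalars Fq).map (trMap Fq Fqm)) ∧
    finrank Fq ((D.restrictScalars Fq).map (trMap Fq Fqm)) = finrank Fqm (galClosure q m D) := by
  have : Finite Fq := .of_injective _ (algebraMap Fq Fqm).injective
  have finrank_eq : finrank Fq Fqm = m := by rw [finrank_eq_card_basis α, Fintype.card_fin]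
  refine ⟨by rw [GD_eq_map_trMap], ?_⟩
  rw [← finrank_VL (Fqm := Fqm), VL_map_trMap_eq_galClosure, hq, finrank_eq]

end RankPaper
end

section
/- For every F_{q^m}-linear subspace D ⊆ F_{q^m}^n, wt_R(D) = min{ wt_H(φ_B(D)) : B is a basis of F_{q^m}^n over F_{q^m} consisting of vectors with all coordinates in F_q }. In particular, for every vector c ∈ F_{q^m}^n, wt_R(c) is the minimum Hamming weight of the coordinate vector (x_1, ..., x_n) over all ways of writing c = Σ_{i=1}^n x_i v_i with {v_1, ..., v_n} ⊆ F_q^n a basis of F_{q^m}^n. -/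
open Submodule Module

namespace RankPaper

variable {n : ℕ}

/-!
Galois descent by traces: if `b` is a basis of `Fqm / Fq` with trace-dual basis `β`, then
`x = ∑ₖ βₖ • Tr(bₖ x)` coordinatewise, and `Tr(bₖ x) = ∑ᵢ (bₖ x)^(q^i)` lies in `D*` whenever
`x ∈ D`. So `D*` is spanned by vectors of `Fq^n`. A basis of `D*` consisting of such vectors
extends, inside `Fq^n`, to a basis `B` of `Fqm^n`, and `φ_B(D)` is supported on the first `dim D*`
coordinates. Conversely, the span of the members of an `Fq`-rational basis `B` indexed by
`Supp(φ_B(D))` contains `D` and is stable under Frobenius, so it contains `D*`.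
-/

section CoordSupport

variable {ι R M : Type*} [Semiring R] [AddCommMonoid M] [Module R M]

/-- The support of a submodule `D` with respect to a basis `B`: the indices at which some element
of `D` has a nonzero `B`-coordinate. For `D ⊆ Fqm^n` this is `Supp(φ_B(D))`. -/
def coordSupport (B : Basis ι R M) (D : Submodule R M) : Set ι :=
  {i | ∃ d ∈ D, B.repr d i ≠ 0}

theorem le_span_image_iff_coordSupport_subset {B : Basis ι R M} {D : Submodule R M} {I : Set ι} :
    D ≤ span R (B '' I) ↔ coordSupport B D ⊆ I := by
  constructor
  · rintro hD i ⟨d, hd, hdi⟩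
    exact B.mem_span_image.mp (hD hd) (Finsupp.mem_support_iff.mpr hdi)
  · exact fun hI d hd ↦ B.mem_span_image.mpr fun i hi ↦ hI ⟨d, hd, Finsupp.mem_support_iff.mp hi⟩

theorem coordSupport_span_singleton (B : Basis ι R M) (c : M) :
    coordSupport B (span R {c}) = {i | B.repr c i ≠ 0} := by
  refine eq_of_forall_ge_iff fun I ↦ ?_
  rw [← le_span_image_iff_coordSupport_subset, span_singleton_le_iff_mem, B.mem_span_image,
    ← Finsupp.fun_support_eq]
  rfl

end CoordSupport

theorem finrank_span_image_basis {ι R M : Type*} [Finite ι] [Ring R] [StrongRankCondition R]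
    [AddCommGroup M] [Module R M] (B : Basis ι R M) (I : Set ι) :
    finrank R (span R (B '' I)) = I.ncard := by
  have := Fintype.ofFinite I
  have := nontrivial_of_invariantBasisNumber R
  have hli : LinearIndependent R fun i : I ↦ B i :=
    B.linearIndependent.comp _ Subtype.val_injective
  rw [Set.image_eq_range, finrank_span_eq_card hli, ← Nat.card_coe_set_eq,
    Nat.card_eq_fintype_card]

theorem exists_basis_mem_and_span_image_eq {ι K V : Type*} [DivisionRing K] [AddCommGroup V]
    [Module K V] (b : Basis ι K V) {S : Set V} (hS : ⊤ ≤ span K S) {W : Submodule K V}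
    (hW : span K (S ∩ W) = W) :
    ∃ B : Basis ι K V, (∀ i, B i ∈ S) ∧ ∃ I : Set ι, span K (B '' I) = W := by
  obtain ⟨T, hT, hTW, hli⟩ := exists_linearIndependent K (S ∩ W)
  have hTS : T ⊆ S := hT.trans Set.inter_subset_left
  let E := Basis.extendLe hli hTS hS
  let B := E.reindex (E.indexEquiv b)
  have hrange : Set.range B = Set.range E := E.range_reindex _
  refine ⟨B, fun i ↦ Basis.extendLe_subset hli hTS hS (hrange ▸ Set.mem_range_self i),
    B ⁻¹' T, ?_⟩
  rw [Set.image_preimage_eq_of_subset (hrange ▸ Basis.subset_extendLe hli hTS hS), hTW, hW]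

section RationalVectors

variable {ι K L : Type*}

/-- The vectors over the `K`-algebra `L` all of whose coordinates lie in (the image of) `K`, as a
subset of `ι → L`. -/
def rationalVectors (ι K L : Type*) [CommRing K] [Ring L] [Algebra K L] : Set (ι → L) :=
  {v | ∀ j, v j ∈ (algebraMap K L).range}

theorem span_rationalVectors_eq_top [Finite ι] [CommRing K] [Ring L] [Algebra K L] :
    span L (rationalVectors ι K L) = ⊤ := by
  classical
  rw [eq_top_iff, ← (Pi.basisFun L ι).span_eq]
  refine span_mono (Set.range_subset_iff.mpr fun i j ↦ ?_)
  rw [Pi.basisFun_apply, Pi.single_apply]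
  split_ifs
  exacts [one_mem _, zero_mem _]

theorem algHom_comp_mem_span_of_subset_rationalVectors [CommRing K] [Ring L] [Algebra K L]
    (σ : L →ₐ[K] L) {S : Set (ι → L)} (hS : S ⊆ rationalVectors ι K L) {x : ι → L}
    (hx : x ∈ span L S) : σ ∘ x ∈ span L S := by
  induction hx using span_induction with
  | mem x hxS =>
    have hfix : σ ∘ x = x := funext fun j ↦ by
      obtain ⟨a, ha⟩ := hS hxS j
      rw [Function.comp_apply, ← ha, σ.commutes]
    exact hfix.symm ▸ subset_span hxS
  | zero =>
    have hzero : σ ∘ (0 : ι → L) = 0 := funext fun _ ↦ map_zero σ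
    exact hzero.symm ▸ zero_mem _
  | add x y _ _ hx hy =>
    have hadd : σ ∘ (x + y) = σ ∘ x + σ ∘ y := funext fun j ↦ map_add σ (x j) (y j)
    exact hadd ▸ add_mem hx hy
  | smul a x _ hx =>
    have hsmul : σ ∘ (a • x) = σ a • (σ ∘ x) := funext fun j ↦ map_mul σ a (x j)
    exact hsmul ▸ smul_mem _ _ hx

variable [Field K] [Field L] [Algebra K L] [FiniteDimensional K L] [Algebra.IsSeparable K L]

theorem sum_trace_mul_smul_traceDual {κ : Type*} [Fintype κ] [DecidableEq κ] (b : Basis κ K L)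
    (x : L) : ∑ k, Algebra.trace K L (b k * x) • b.traceDual k = x := by
  conv_rhs => rw [← b.traceDual.sum_repr x]
  simp only [Basis.traceDual_repr_apply, Algebra.traceForm_apply, mul_comm x]

theorem le_span_image_algebraMap_trace (D : Submodule L (ι → L)) :
    D ≤ span L ((fun x j ↦ algebraMap K L (Algebra.trace K L (x j))) '' (D : Set (ι → L))) := by
  intro x hx
  let b := finBasis K L
  have hexpand : x = ∑ k, b.traceDual k •
      fun j ↦ algebraMap K L (Algebra.trace K L ((b k • x) j)) := funext fun j ↦ by
    simp only [Finset.sum_apply, Pi.smul_apply, smul_eq_mul, mul_comm (b.traceDual _),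
      ← Algebra.smul_def, sum_trace_mul_smul_traceDual]
  rw [hexpand]
  exact sum_mem fun k _ ↦ smul_mem _ _ (subset_span ⟨b k • x, smul_mem _ _ hx, rfl⟩)

end RationalVectors

section GalClosure

theorem qpowMap_mem_galClosure {q m i : ℕ} {L : Type} [Field L] {D : Submodule L (Fin n → L)}
    (hi : i < m) {x : Fin n → L} (hx : x ∈ D) : qpowMap q i x ∈ galClosure q m D :=
  subset_span (Set.mem_biUnion (Finset.mem_coe.mpr (Finset.mem_range.mpr hi)) ⟨x, hx, rfl⟩)

theorem le_galClosure (q : ℕ) {m : ℕ} (hm : 0 < m) {L : Type} [Field L]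
    (D : Submodule L (Fin n → L)) : D ≤ galClosure q m D := by
  intro x hx
  have hzero : qpowMap q 0 x = x := funext fun j ↦ by rw [qpowMap, pow_zero, pow_one]
  exact hzero ▸ qpowMap_mem_galClosure hm hx

variable {Fq Fqm : Type} [Field Fq] [Field Fqm] [Algebra Fq Fqm]

theorem exists_algHom_comp_eq_qpowMap (Fq Fqm : Type) [Field Fq] [Finite Fq] [Field Fqm]
    [Algebra Fq Fqm] (i : ℕ) :
    ∃ σ : Fqm →ₐ[Fq] Fqm, ∀ x : Fin n → Fqm, qpowMap (Nat.card Fq) i x = σ ∘ x := by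
  have := Fintype.ofFinite Fq
  refine ⟨FiniteField.frobeniusAlgHom Fq Fqm ^ i, fun x ↦ funext fun j ↦ ?_⟩
  rw [Function.comp_apply, AlgHom.coe_pow, FiniteField.coe_frobeniusAlgHom, pow_iterate, qpowMap,
    Nat.card_eq_fintype_card]

theorem galClosure_le_span_of_subset_rationalVectors [Finite Fq] (m : ℕ) {S : Set (Fin n → Fqm)}
    (hS : S ⊆ rationalVectors (Fin n) Fq Fqm) {D : Submodule Fqm (Fin n → Fqm)}
    (hD : D ≤ span Fqm S) : galClosure (Nat.card Fq) m D ≤ span Fqm S := by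
  refine span_le.mpr (Set.iUnion₂_subset fun i _ ↦ ?_)
  rintro _ ⟨x, hx, rfl⟩
  obtain ⟨σ, hσ⟩ := exists_algHom_comp_eq_qpowMap (n := n) Fq Fqm i
  exact hσ x ▸ algHom_comp_mem_span_of_subset_rationalVectors σ hS (hD hx)

theorem algebraMap_trace_mem_galClosure [Finite Fqm] {D : Submodule Fqm (Fin n → Fqm)}
    {x : Fin n → Fqm} (hx : x ∈ D) :
    (fun j ↦ algebraMap Fq Fqm (Algebra.trace Fq Fqm (x j))) ∈
      galClosure (Nat.card Fq) (finrank Fq Fqm) D := by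
  have htrace : (fun j ↦ algebraMap Fq Fqm (Algebra.trace Fq Fqm (x j))) =
      ∑ i ∈ Finset.range (finrank Fq Fqm), qpowMap (Nat.card Fq) i x := funext fun j ↦ by
    simp only [FiniteField.algebraMap_trace_eq_sum_pow, Finset.sum_apply, qpowMap]
  rw [htrace]
  exact sum_mem fun i hi ↦ qpowMap_mem_galClosure (Finset.mem_range.mp hi) hx

theorem span_rationalVectors_inter_galClosure [Finite Fqm] (D : Submodule Fqm (Fin n → Fqm)) :
    span Fqm (rationalVectors (Fin n) Fq Fqm ∩ galClosure (Nat.card Fq) (finrank Fq Fqm) D) =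
      galClosure (Nat.card Fq) (finrank Fq Fqm) D := by
  have : Finite Fq := .of_injective _ (algebraMap Fq Fqm).injective
  refine le_antisymm (span_le.mpr Set.inter_subset_right)
    (galClosure_le_span_of_subset_rationalVectors _ Set.inter_subset_left ?_)
  refine (le_span_image_algebraMap_trace (K := Fq) D).trans (span_mono ?_)
  rintro _ ⟨x, hx, rfl⟩
  exact ⟨fun j ↦ ⟨_, rfl⟩, algebraMap_trace_mem_galClosure hx⟩

end GalClosure

section Weights

variable {Fq Fqm : Type} [Field Fq] [Field Fqm] [Algebra Fq Fqm]

theorem wtH_map_equivFun (B : Basis (Fin n) Fqm (Fin n → Fqm)) (D : Submodule Fqm (Fin n → Fqm)) :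
    wtH (D.map B.equivFun.toLinearMap) = (coordSupport B D).ncard := by
  simp only [wtH, coordSupport, mem_map, exists_exists_and_eq_and]
  rfl

theorem wtR_le_wtH_map_equivFun [Finite Fq] (m : ℕ) {B : Basis (Fin n) Fqm (Fin n → Fqm)}
    (hB : ∀ i, B i ∈ rationalVectors (Fin n) Fq Fqm) (D : Submodule Fqm (Fin n → Fqm)) :
    wtR (Nat.card Fq) m D ≤ wtH (D.map B.equivFun.toLinearMap) := by
  have hD : D ≤ span Fqm (B '' coordSupport B D) :=
    le_span_image_iff_coordSupport_subset.mpr subset_rfl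
  have hrat : B '' coordSupport B D ⊆ rationalVectors (Fin n) Fq Fqm :=
    Set.image_subset_iff.mpr fun i _ ↦ hB i
  rw [wtH_map_equivFun, ← finrank_span_image_basis B]
  exact finrank_mono (galClosure_le_span_of_subset_rationalVectors m hrat hD)

theorem exists_basis_wtH_map_equivFun_le_wtR [Finite Fqm] (D : Submodule Fqm (Fin n → Fqm)) :
    ∃ B : Basis (Fin n) Fqm (Fin n → Fqm), (∀ i, B i ∈ rationalVectors (Fin n) Fq Fqm) ∧
      wtH (D.map B.equivFun.toLinearMap) ≤ wtR (Nat.card Fq) (finrank Fq Fqm) D := by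
  obtain ⟨B, hB, I, hI⟩ := exists_basis_mem_and_span_image_eq (Pi.basisFun Fqm (Fin n))
    span_rationalVectors_eq_top.ge (span_rationalVectors_inter_galClosure (Fq := Fq) D)
  have hsupp : coordSupport B D ⊆ I :=
    le_span_image_iff_coordSupport_subset.mp (hI ▸ le_galClosure _ finrank_pos D)
  refine ⟨B, hB, ?_⟩
  rw [wtH_map_equivFun, wtR, ← hI, finrank_span_image_basis]
  exact Set.ncard_le_ncard hsupp

theorem isLeast_wtH_map_equivFun [Finite Fqm] (D : Submodule Fqm (Fin n → Fqm)) :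
    IsLeast { w | ∃ B : Basis (Fin n) Fqm (Fin n → Fqm),
        (∀ i j, B i j ∈ (algebraMap Fq Fqm).range) ∧ w = wtH (D.map B.equivFun.toLinearMap) }
      (wtR (Nat.card Fq) (finrank Fq Fqm) D) := by
  have : Finite Fq := .of_injective _ (algebraMap Fq Fqm).injective
  obtain ⟨B, hB, hle⟩ := exists_basis_wtH_map_equivFun_le_wtR (Fq := Fq) D
  refine ⟨⟨B, hB, (wtR_le_wtH_map_equivFun _ hB D).antisymm hle⟩, ?_⟩
  rintro _ ⟨B', hB', rfl⟩
  exact wtR_le_wtH_map_equivFun _ hB' D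

end Weights

/-- `wt_R(D)` equals the minimum of `wt_H(φ_B(D))` over all bases `B` of
`Fqm^n` (over `Fqm`) whose vectors have all their coordinates in `Fq`; in particular,
`wt_R(c)` is the minimum Hamming weight of the coordinate vector of `c` over all such
bases. -/
theorem stmt1 (q m n : ℕ) (Fq Fqm : Type) [Field Fq] [Field Fqm] [Algebra Fq Fqm]
    [Finite Fqm] (hq : Nat.card Fq = q) (hm : finrank Fq Fqm = m)
    (D : Submodule Fqm (Fin n → Fqm)) :
    wtR q m D = sInf { w | ∃ B : Basis (Fin n) Fqm (Fin n → Fqm),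
        (∀ i j, B i j ∈ (algebraMap Fq Fqm).range) ∧
        w = wtH (D.map B.equivFun.toLinearMap) } ∧
    ∀ c : Fin n → Fqm,
      wtRv q m c = sInf { w | ∃ B : Basis (Fin n) Fqm (Fin n → Fqm),
        (∀ i j, B i j ∈ (algebraMap Fq Fqm).range) ∧
        w = {j : Fin n | B.equivFun c j ≠ 0}.ncard } := by
  subst hq hm
  refine ⟨(isLeast_wtH_map_equivFun D).csInf_eq.symm, fun c ↦ ?_⟩
  have hc := (isLeast_wtH_map_equivFun (Fq := Fq) (span Fqm {c})).csInf_eq.symm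
  simpa only [wtRv, wtH_map_equivFun, coordSupport_span_singleton, ← Basis.equivFun_apply] using hc

end RankPaper
end

section
/- For every F_{q^m}-linear code C ⊆ F_{q^m}^n of dimension k and every 1 ≤ r ≤ k, the r-th generalized rank weight satisfies d_{R,r}(C) = min{ d_{H,r}(φ_B(C)) : B is a basis of F_{q^m}^n over F_{q^m} consisting of vectors with all coordinates in F_q }. -/
open Submodule Module

namespace RankPaper

variable {n : ℕ}

/-!
A subspace of `Fqm^n` is Galois closed exactly when it is spanned by part of a basis `B` with
coordinates in `Fq`. Indeed, if `V` is Galois closed and `b`, `b*` are trace-dual bases of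
`Fqm / Fq`, then every `v ∈ V` equals `∑ i, b* i • Tr (b i • v)`, where the coordinatewise trace
`Tr w = ∑ i < m, w^(q^i)` maps `V` into its vectors with coordinates in `Fq`.

On the other hand `D ⊆ span {B i | i ∈ I}` means that `φ_B D` is supported in `I`, so
`d_{H,r}(φ_B C)` is the least dimension of such a span meeting `C` in dimension at least `r`.
-/

section LinearAlgebra

variable {ι K E : Type*} [DivisionRing K] [AddCommGroup E] [Module K E]

lemma exists_le_finrank_eq {W : Submodule K E} {r : ℕ} (hr : r ≤ finrank K W) :
    ∃ D ≤ W, finrank K D = r := by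
  obtain ⟨f, hf⟩ := exists_linearIndependent_of_le_finrank hr
  have hf' : LinearIndependent K fun i => (f i : E) := hf.map' W.subtype W.ker_subtype
  refine ⟨span K (Set.range fun i => (f i : E)), span_le.2 ?_, ?_⟩
  · rintro _ ⟨i, rfl⟩
    exact (f i).2
  · rw [finrank_span_eq_card hf', Fintype.card_fin]

lemma finrank_span_basis_image (b : Basis ι K E) (I : Set ι) :
    finrank K (span K (b '' I)) = I.ncard := by
  simpa using! congrArg ENat.toNat (toENat_rank_span_set (b.linearIndependent.linearIndepOn I))

lemma exists_basis_range_subset_span_image_eq (b₀ : Basis ι K E) {S T : Set E} (hTS : T ⊆ S)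
    (hS : span K S = ⊤) :
    ∃ (b : Basis ι K E) (I : Set ι), Set.range b ⊆ S ∧ span K (b '' I) = span K T := by
  obtain ⟨s, hsT, hspan, hs⟩ := exists_linearIndependent K T
  let b₁ := Basis.extendLe hs (hsT.trans hTS) hS.ge
  let b := b₁.reindex (b₁.indexEquiv b₀)
  have hrange : Set.range b = Set.range b₁ := b₁.range_reindex _
  refine ⟨b, b ⁻¹' s, ?_, ?_⟩
  · exact hrange.trans_subset (Basis.extendLe_subset hs _ _)
  · have hsb : s ⊆ Set.range b := (Basis.subset_extendLe hs _ _).trans hrange.superset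
    rw [Set.image_preimage_eq_of_subset hsb, hspan]

end LinearAlgebra

section HammingWeight

variable {K : Type} [Field K]

/-- The support `Supp(D)` of a subspace, so that `wtH D` is its cardinality. -/
def supp (D : Submodule K (Fin n → K)) : Set (Fin n) :=
  {i | ∃ d ∈ D, d i ≠ 0}

lemma supp_map_equivFun_subset_iff {E : Type*} [AddCommGroup E] [Module K E]
    (B : Basis (Fin n) K E) {D : Submodule K E} {I : Set (Fin n)} :
    supp (D.map B.equivFun.toLinearMap) ⊆ I ↔ D ≤ span K (B '' I) := by
  simp only [SetLike.le_def, B.mem_span_image, supp, Set.subset_def, Set.mem_ofPred_eq,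
    Submodule.mem_map, SetLike.mem_coe, Finsupp.mem_support_iff]
  constructor
  · exact fun h d hd i hi => h i ⟨_, ⟨d, hd, rfl⟩, hi⟩
  · rintro h i ⟨_, ⟨d, hd, rfl⟩, hi⟩
    exact h hd i hi

lemma dH_le_wtH {C D : Submodule K (Fin n → K)} (hDC : D ≤ C) : dH C (finrank K D) ≤ wtH D :=
  Nat.sInf_le ⟨D, hDC, rfl, rfl⟩

lemma exists_wtH_eq_dH {C : Submodule K (Fin n → K)} {r : ℕ} (hr : r ≤ finrank K C) :
    ∃ D ≤ C, finrank K D = r ∧ wtH D = dH C r := by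
  obtain ⟨D₀, hD₀C, hD₀r⟩ := exists_le_finrank_eq hr
  obtain ⟨D, hDC, hDr, hw⟩ := Nat.sInf_mem
    (s := {w | ∃ D : Submodule K (Fin n → K), D ≤ C ∧ finrank K D = r ∧ w = wtH D})
    ⟨wtH D₀, D₀, hD₀C, hD₀r, rfl⟩
  exact ⟨D, hDC, hDr, hw.symm⟩

variable {E : Type*} [AddCommGroup E] [Module K E] (B : Basis (Fin n) K E)
  {C : Submodule K E} {r : ℕ}

lemma dH_map_equivFun_le_ncard {I : Set (Fin n)} (hI : r ≤ finrank K ↥(C ⊓ span K (B '' I))) :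
    dH (C.map B.equivFun.toLinearMap) r ≤ I.ncard := by
  obtain ⟨D, hD, rfl⟩ := exists_le_finrank_eq hI
  have hsupp : supp (D.map B.equivFun.toLinearMap) ⊆ I :=
    (supp_map_equivFun_subset_iff B).2 (hD.trans inf_le_right)
  calc dH (C.map B.equivFun.toLinearMap) (finrank K D)
    _ = dH (C.map B.equivFun.toLinearMap) (finrank K (D.map B.equivFun.toLinearMap)) := by
      rw [B.equivFun.finrank_map_eq D]
    _ ≤ wtH (D.map B.equivFun.toLinearMap) := dH_le_wtH (map_mono (hD.trans inf_le_left))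
    _ ≤ I.ncard := Set.ncard_le_ncard hsupp

lemma exists_ncard_eq_dH_map_equivFun (hr : r ≤ finrank K C) :
    ∃ I : Set (Fin n), r ≤ finrank K ↥(C ⊓ span K (B '' I)) ∧
      I.ncard = dH (C.map B.equivFun.toLinearMap) r := by
  have : Module.Finite K E := .of_basis B
  obtain ⟨D', hD'C, hD'r, hw⟩ := exists_wtH_eq_dH (hr.trans_eq (B.equivFun.finrank_map_eq C).symm)
  obtain ⟨D, rfl⟩ := map_surjective_of_surjective (f := B.equivFun.toLinearMap)
    B.equivFun.surjective D'
  have hDC : D ≤ C := (map_le_map_iff_of_injective B.equivFun.injective _ _).1 hD'C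
  refine ⟨supp (D.map B.equivFun.toLinearMap), ?_, hw⟩
  rw [← hD'r, B.equivFun.finrank_map_eq D]
  exact finrank_mono (le_inf hDC ((supp_map_equivFun_subset_iff B).1 subset_rfl))

end HammingWeight

section GaloisDescent

lemma galoisClosed_iff_forall_qpowMap_mem {K : Type} [Field K] {q m : ℕ} (hm : 0 < m)
    {V : Submodule K (Fin n → K)} :
    GaloisClosed q m V ↔ ∀ i < m, ∀ v ∈ V, qpowMap q i v ∈ V := by
  have le_galClosure : V ≤ galClosure q m V := fun v hv =>
    subset_span (Set.mem_biUnion (Finset.mem_range.2 hm) ⟨v, hv, funext fun j => by simp [qpowMap]⟩)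
  rw [GaloisClosed, le_antisymm_iff, and_iff_left le_galClosure, galClosure, span_le]
  simp only [Set.iUnion_subset_iff, Set.image_subset_iff, Finset.mem_range]
  rfl

variable {Fq Fqm : Type} [Field Fq] [Field Fqm] [Algebra Fq Fqm]

lemma mem_range_embFq_iff {v : Fin n → Fqm} :
    v ∈ Set.range (embFq Fq Fqm) ↔ ∀ j, v j ∈ (algebraMap Fq Fqm).range := by
  constructor
  · rintro ⟨w, rfl⟩ j
    exact ⟨w j, rfl⟩
  · intro hv
    choose w hw using hv
    exact ⟨w, funext hw⟩

lemma basisFun_mem_range_embFq (i : Fin n) :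
    Pi.basisFun Fqm (Fin n) i ∈ Set.range (embFq Fq Fqm) := by
  refine ⟨Pi.basisFun Fq (Fin n) i, funext fun j => ?_⟩
  simp [embFq, Pi.single_apply, apply_ite]

variable (n Fq Fqm) in
lemma span_range_embFq :
    span Fqm (Set.range (embFq (n := n) Fq Fqm)) = ⊤ := by
  rw [eq_top_iff, ← (Pi.basisFun Fqm (Fin n)).span_eq]
  exact span_mono (Set.range_subset_iff.2 basisFun_mem_range_embFq)

variable (n Fq Fqm) in
/-- `qpowMap (Nat.card Fq) i` as a map semilinear over the `i`-th power of the Frobenius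
endomorphism, so that preimages of subspaces under it are subspaces. -/
def qpowSemilinearMap [Fintype Fq] (i : ℕ) :
    (Fin n → Fqm) →ₛₗ[(FiniteField.frobeniusAlgHom Fq Fqm ^ i : Fqm →ₐ[Fq] Fqm).toRingHom]
      (Fin n → Fqm) where
  toFun v j := (FiniteField.frobeniusAlgHom Fq Fqm ^ i) (v j)
  map_add' v w := funext fun j => map_add _ (v j) (w j)
  map_smul' a v := funext fun j => map_mul _ a (v j)

lemma qpowSemilinearMap_apply [Fintype Fq] (i : ℕ) (v : Fin n → Fqm) :
    qpowSemilinearMap n Fq Fqm i v = qpowMap (Nat.card Fq) i v := by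
  funext j
  change (FiniteField.frobeniusAlgHom Fq Fqm ^ i) (v j) = v j ^ Nat.card Fq ^ i
  rw [AlgHom.coe_pow, FiniteField.coe_frobeniusAlgHom, pow_iterate, Nat.card_eq_fintype_card]

lemma qpowSemilinearMap_embFq [Fintype Fq] (i : ℕ) (w : Fin n → Fq) :
    qpowSemilinearMap n Fq Fqm i (embFq Fq Fqm w) = embFq Fq Fqm w :=
  funext fun j => (FiniteField.frobeniusAlgHom Fq Fqm ^ i).commutes (w j)

lemma galoisClosed_span_of_subset_range_embFq [Finite Fq] {m : ℕ} (hm : 0 < m)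
    {S : Set (Fin n → Fqm)} (hS : S ⊆ Set.range (embFq Fq Fqm)) :
    GaloisClosed (Nat.card Fq) m (span Fqm S) := by
  have := Fintype.ofFinite Fq
  refine (galoisClosed_iff_forall_qpowMap_mem hm).2 fun i _ v hv => ?_
  have hspan : span Fqm S ≤ (span Fqm S).comap (qpowSemilinearMap n Fq Fqm i) := by
    refine span_le.2 fun x hx => ?_
    obtain ⟨w, rfl⟩ := hS hx
    rw [SetLike.mem_coe, mem_comap, qpowSemilinearMap_embFq]
    exact subset_span hx
  simpa only [mem_comap, qpowSemilinearMap_apply] using hspan hv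

lemma sum_traceDual_smul_embFq_trace [FiniteDimensional Fq Fqm] [Algebra.IsSeparable Fq Fqm]
    {ι : Type*} [Fintype ι] [DecidableEq ι] (b : Basis ι Fq Fqm) (v : Fin n → Fqm) :
    ∑ i, b.traceDual i • embFq Fq Fqm (fun j => Algebra.trace Fq Fqm ((b i • v) j)) = v := by
  funext j
  rw [Finset.sum_apply, ← b.traceDual.sum_repr (v j)]
  refine Finset.sum_congr rfl fun i _ => ?_
  change b.traceDual i * algebraMap Fq Fqm (Algebra.trace Fq Fqm (b i * v j)) = _
  rw [b.traceDual_repr_apply, Algebra.traceForm_apply, Algebra.smul_def, mul_comm, mul_comm (v j)]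

section Finite

variable [Finite Fqm] {V : Submodule Fqm (Fin n → Fqm)}

lemma embFq_trace_eq_sum_qpowMap (w : Fin n → Fqm) :
    embFq Fq Fqm (fun j => Algebra.trace Fq Fqm (w j)) =
      ∑ i ∈ Finset.range (finrank Fq Fqm), qpowMap (Nat.card Fq) i w := by
  funext j
  rw [Finset.sum_apply]
  exact FiniteField.algebraMap_trace_eq_sum_pow Fq Fqm (w j)

lemma span_inter_range_embFq_eq_of_galoisClosed
    (hV : GaloisClosed (Nat.card Fq) (finrank Fq Fqm) V) :
    span Fqm (V ∩ Set.range (embFq Fq Fqm)) = V := by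
  have := Finite.of_injective _ (algebraMap Fq Fqm).injective
  have trace_mem (w : Fin n → Fqm) (hw : w ∈ V) :
      embFq Fq Fqm (fun j => Algebra.trace Fq Fqm (w j)) ∈ V := by
    rw [embFq_trace_eq_sum_qpowMap]
    exact sum_mem fun i hi => (galoisClosed_iff_forall_qpowMap_mem finrank_pos).1 hV i
      (Finset.mem_range.1 hi) w hw
  refine le_antisymm (span_le.2 Set.inter_subset_left) fun v hv => ?_
  rw [← sum_traceDual_smul_embFq_trace (finBasis Fq Fqm) v]
  exact sum_mem fun i _ => smul_mem _ _ <|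
    subset_span ⟨trace_mem _ (V.smul_mem _ hv), Set.mem_range_self _⟩

lemma galoisClosed_iff_exists_basis :
    GaloisClosed (Nat.card Fq) (finrank Fq Fqm) V ↔
      ∃ (B : Basis (Fin n) Fqm (Fin n → Fqm)) (I : Set (Fin n)),
        (∀ i j, B i j ∈ (algebraMap Fq Fqm).range) ∧ V = span Fqm (B '' I) := by
  have := Finite.of_injective _ (algebraMap Fq Fqm).injective
  simp only [← mem_range_embFq_iff]
  constructor
  · intro hV
    obtain ⟨B, I, hB, hI⟩ := exists_basis_range_subset_span_image_eq (Pi.basisFun Fqm (Fin n))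
      (Set.inter_subset_right (s := (V : Set (Fin n → Fqm)))) (span_range_embFq n Fq Fqm)
    exact ⟨B, I, Set.range_subset_iff.1 hB,
      (hI.trans (span_inter_range_embFq_eq_of_galoisClosed hV)).symm⟩
  · rintro ⟨B, I, hB, rfl⟩
    exact galoisClosed_span_of_subset_range_embFq finrank_pos
      (Set.image_subset_iff.2 fun i _ => hB i)

end Finite

end GaloisDescent

/-- for a linear code `C ⊆ Fqm^n` of dimension `k` and `1 ≤ r ≤ k`,
`d_{R,r}(C)` equals the minimum of `d_{H,r}(φ_B(C))` over all bases `B` of `Fqm^n`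
whose vectors have all their coordinates in `Fq`. -/
theorem stmt2 (q m n k r : ℕ) (Fq Fqm : Type) [Field Fq] [Field Fqm] [Algebra Fq Fqm]
    [Finite Fqm] (hq : Nat.card Fq = q) (hm : finrank Fq Fqm = m)
    (C : Submodule Fqm (Fin n → Fqm)) (hk : finrank Fqm C = k)
    (hr1 : 1 ≤ r) (hrk : r ≤ k) :
    dR q m C r = sInf { w | ∃ B : Basis (Fin n) Fqm (Fin n → Fqm),
        (∀ i j, B i j ∈ (algebraMap Fq Fqm).range) ∧
        w = dH (C.map B.equivFun.toLinearMap) r } := by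
  subst hq hm hk
  have := Finite.of_injective _ (algebraMap Fq Fqm).injective
  apply le_antisymm
  · refine le_csInf ⟨_, Pi.basisFun Fqm (Fin n),
      fun i => mem_range_embFq_iff.1 (basisFun_mem_range_embFq i), rfl⟩ ?_
    rintro _ ⟨B, hB, rfl⟩
    obtain ⟨I, hrI, hI⟩ := exists_ncard_eq_dH_map_equivFun B hrk
    rw [← hI, ← finrank_span_basis_image B I]
    exact Nat.sInf_le ⟨_, galoisClosed_iff_exists_basis.2 ⟨B, I, hB, rfl⟩, hrI, rfl⟩
  · have top_closed : GaloisClosed (Nat.card Fq) (finrank Fq Fqm)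
        (⊤ : Submodule Fqm (Fin n → Fqm)) :=
      (galoisClosed_iff_forall_qpowMap_mem finrank_pos).2 fun _ _ _ _ => mem_top
    refine le_csInf ⟨_, ⊤, top_closed, by rwa [inf_top_eq], rfl⟩ ?_
    rintro _ ⟨V, hV, hrV, rfl⟩
    obtain ⟨B, I, hB, rfl⟩ := galoisClosed_iff_exists_basis.1 hV
    rw [finrank_span_basis_image B I]
    exact le_trans (Nat.sInf_le ⟨B, hB, rfl⟩) (dH_map_equivFun_le_ncard B hrV)

end RankPaper
end
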